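/- (Lemma 2.2(i)) Let 𝔤 be of type A_2. For every 𝐜 = (c_1,c_2,c_3) ∈ ℕ^3, the monomial M = E_{α_1}^{(c_2)} E_{α_2}^{(c_1+c_2)} E_{α_1}^{(c_3)} satisfies M = E_𝐜 + ∑_{𝐝 ∈ ℕ^3, 𝐝 > 𝐜} ξ_𝐝 E_𝐝 with ξ_𝐝 ∈ ℤ[q,q^{-1}]; i.e. f(𝐜) = (c_2, c_1+c_2, c_3) works in Theorem 1(i) for type A_2. -/

import Mathlib

/-!
Common setup for the quantized enveloping algebra `U_q(𝔤)` of Chari–Xi,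
"Monomial bases of quantized enveloping algebras".

The base field is `𝔽 = ℚ(q)`, realized as `RatFunc ℚ` with `q = X`.  Given the Cartan matrix
`a : Fin n → Fin n → ℤ` and symmetrizing integers `d : Fin n → ℕ`, the algebra `U = U n a d`
is presented by generators `E i`, `F i`, `K i`, `K i ⁻¹` and the defining relations of
Proposition 1.1 of the paper.  `Uplus` is the subalgebra generated by the `E i`,
`Ediv i m = E i ^ m / [m]_{d i}!` are the divided powers, `𝒜 = ℤ[q,q⁻¹] ⊆ 𝔽`, and
`UA` is the `𝒜`-subalgebra generated by the divided powers.

Lusztig's braid automorphisms are abstracted as a family `T` of algebra automorphisms,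
constrained by the predicate `IsBraid` recording Lusztig's formulas on generators (which
determine `T` uniquely).  For a word `w` (a reduced expression) the PBW root vectors and PBW
monomials are `rootVec T w t m` (`= T_{i₁} ⋯ T_{i_t}(E_{i_{t+1}}^{(m)})`) and
`pbw T w [c₁, …, c_r] = E_{β₁}^{(c₁)} ⋯ E_{β_r}^{(c_r)}`, while
`mono w [c₁, …, c_r] = E_{α_{i₁}}^{(c₁)} ⋯ E_{α_{i_r}}^{(c_r)}` is a monomial in divided
powers of the Chevalley generators.

The root-lattice combinatorics is handled by `sRefl` (simple reflections acting on
coordinates w.r.t. the simple roots), `rootAt w t` (`= s_{i₁} ⋯ s_{i_t}(α_{i_{t+1}})`) and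
`applyWord`; a word is a reduced expression iff all the roots `rootAt w t` are positive
(`IsReducedWord`), and a reduced word represents the longest element `w₀` iff it moreover
sends every simple root to a negative root (`IsLongestWord`).
-/

noncomputable section
namespace ChariXi

/-- The base field `ℚ(q)`. -/
abbrev 𝔽 : Type := RatFunc ℚ

/-- The indeterminate `q`. -/
def qq : 𝔽 := RatFunc.X

/-- The quantum integer `[m]_d = (q^{dm} - q^{-dm})/(q^d - q^{-d})`. -/
def qInt (dd m : ℕ) : 𝔽 := (qq ^ (dd * m) - qq⁻¹ ^ (dd * m)) / (qq ^ dd - qq⁻¹ ^ dd)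

/-- The quantum factorial `[m]_d!`. -/
def qFact (dd : ℕ) : ℕ → 𝔽
  | 0 => 1
  | m + 1 => qInt dd (m + 1) * qFact dd m

/-- The quantum binomial coefficient `[m choose r]_d`. -/
def qBinom (dd m r : ℕ) : 𝔽 := qFact dd m / (qFact dd r * qFact dd (m - r))

/-- `𝒜 = ℤ[q,q⁻¹]` as a subring of `ℚ(q)`. -/
def 𝒜 : Subring 𝔽 := Subring.closure {qq, qq⁻¹}

/-- `ℤ[q⁻¹]` as a subring of `ℚ(q)`. -/
def 𝒜inv : Subring 𝔽 := Subring.closure {qq⁻¹}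

/-- `q⁻¹ ℤ[q⁻¹] ⊆ ℚ(q)`. -/
def qinvZqinv : Set 𝔽 := {x | ∃ y ∈ 𝒜inv, x = qq⁻¹ * y}

/-- Generators of `U_q(𝔤)`. -/
inductive Gen (n : ℕ) : Type
  | E : Fin n → Gen n
  | F : Fin n → Gen n
  | K : Fin n → Gen n
  | Kinv : Fin n → Gen n

variable (n : ℕ)

namespace Fr
/-- `E_{α_i}` in the free algebra. -/
def E (i : Fin n) : FreeAlgebra 𝔽 (Gen n) := FreeAlgebra.ι 𝔽 (Gen.E i)
/-- `F_{α_i}` in the free algebra. -/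
def F (i : Fin n) : FreeAlgebra 𝔽 (Gen n) := FreeAlgebra.ι 𝔽 (Gen.F i)
/-- `K_i` in the free algebra. -/
def K (i : Fin n) : FreeAlgebra 𝔽 (Gen n) := FreeAlgebra.ι 𝔽 (Gen.K i)
/-- `K_i⁻¹` in the free algebra. -/
def Kinv (i : Fin n) : FreeAlgebra 𝔽 (Gen n) := FreeAlgebra.ι 𝔽 (Gen.Kinv i)
end Fr

variable (a : Fin n → Fin n → ℤ) (d : Fin n → ℕ)

/-- The hypotheses on the Cartan data `(aᵢⱼ)`, `(dᵢ)` of a finite-dimensional complex simple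
Lie algebra used in the paper:  `aᵢᵢ = 2`, `aᵢⱼ ≤ 0` for `i ≠ j`, `(dᵢ aᵢⱼ)` is symmetric and
`dᵢ ∈ {1,2,3}`. -/
structure IsCartan : Prop where
  diag : ∀ i, a i i = 2
  offdiag : ∀ i j, i ≠ j → a i j ≤ 0
  symmetrizable : ∀ i j, (d i : ℤ) * a i j = (d j : ℤ) * a j i
  dmem : ∀ i, d i ∈ ({1, 2, 3} : Set ℕ)

/-- The defining relations of `U_q(𝔤)` (Proposition 1.1 of the paper). -/
inductive Rel : FreeAlgebra 𝔽 (Gen n) → FreeAlgebra 𝔽 (Gen n) → Prop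
  | KKinv (i : Fin n) : Rel (Fr.K n i * Fr.Kinv n i) 1
  | KinvK (i : Fin n) : Rel (Fr.Kinv n i * Fr.K n i) 1
  | KK (i j : Fin n) : Rel (Fr.K n i * Fr.K n j) (Fr.K n j * Fr.K n i)
  | KE (i j : Fin n) :
      Rel (Fr.K n i * Fr.E n j) ((qq ^ ((d i : ℤ) * a i j)) • (Fr.E n j * Fr.K n i))
  | KF (i j : Fin n) :
      Rel (Fr.K n i * Fr.F n j) ((qq ^ (-((d i : ℤ) * a i j))) • (Fr.F n j * Fr.K n i))
  | EF (i j : Fin n) :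
      Rel (Fr.E n i * Fr.F n j - Fr.F n j * Fr.E n i)
        (if i = j then (qq ^ (d i) - qq⁻¹ ^ (d i))⁻¹ • (Fr.K n i - Fr.Kinv n i) else 0)
  | serreE (i j : Fin n) (h : i ≠ j) :
      Rel (∑ r ∈ Finset.range ((1 - a i j).toNat + 1),
            ((-1 : 𝔽) ^ r * qBinom (d i) (1 - a i j).toNat r) •
              (Fr.E n i ^ r * Fr.E n j * Fr.E n i ^ ((1 - a i j).toNat - r))) 0
  | serreF (i j : Fin n) (h : i ≠ j) :
      Rel (∑ r ∈ Finset.range ((1 - a i j).toNat + 1),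
            ((-1 : 𝔽) ^ r * qBinom (d i) (1 - a i j).toNat r) •
              (Fr.F n i ^ r * Fr.F n j * Fr.F n i ^ ((1 - a i j).toNat - r))) 0

/-- The quantized enveloping algebra `U_q(𝔤)` over `ℚ(q)`. -/
abbrev U := RingQuot (Rel n a d)

/-- The quotient map. -/
def mk : FreeAlgebra 𝔽 (Gen n) →ₐ[𝔽] U n a d := RingQuot.mkAlgHom 𝔽 (Rel n a d)

/-- The Chevalley generator `E_{α_i}`. -/
def Eg (i : Fin n) : U n a d := mk n a d (Fr.E n i)
/-- The Chevalley generator `F_{α_i}`. -/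
def Fg (i : Fin n) : U n a d := mk n a d (Fr.F n i)
/-- The torus generator `K_i`. -/
def Kg (i : Fin n) : U n a d := mk n a d (Fr.K n i)
/-- The torus generator `K_i⁻¹`. -/
def Kinvg (i : Fin n) : U n a d := mk n a d (Fr.Kinv n i)

/-- The divided power `E_{α_i}^{(m)} = E_{α_i}^m / [m]_{dᵢ}!`. -/
def Ediv (i : Fin n) (m : ℕ) : U n a d := (qFact (d i) m)⁻¹ • Eg n a d i ^ m
/-- The divided power `F_{α_i}^{(m)}`. -/
def Fdiv (i : Fin n) (m : ℕ) : U n a d := (qFact (d i) m)⁻¹ • Fg n a d i ^ m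
/-- Integer powers `K_i^z`. -/
def Kzpow (i : Fin n) (z : ℤ) : U n a d :=
  if 0 ≤ z then Kg n a d i ^ z.toNat else Kinvg n a d i ^ (-z).toNat

/-- `U⁺`, the `ℚ(q)`-subalgebra generated by the `E_{α_i}`. -/
def Uplus : Subalgebra 𝔽 (U n a d) := Algebra.adjoin 𝔽 (Set.range (Eg n a d))

/-- The integral form `U_𝒜⁺`: the `ℤ[q,q⁻¹]`-subalgebra of `U⁺` generated by the divided
powers `E_{α_i}^{(m)}`. -/
def UA : Subalgebra 𝒜 (U n a d) :=
  Algebra.adjoin 𝒜 {x : U n a d | ∃ i m, x = Ediv n a d i m}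

/-- The homogeneous component `U⁺_ν` of `U⁺`:  the span of the monomials in the `E_{α_i}`
in which `i` occurs exactly `ν i` times (extended to integer `ν`, with `U⁺_ν = 0` if some
`ν i < 0`). -/
def wtSpace (ν : Fin n → ℤ) : Submodule 𝔽 (U n a d) :=
  Submodule.span 𝔽
    {x : U n a d | ∃ l : List (Fin n),
      x = (l.map (Eg n a d)).prod ∧ ∀ i, (l.count i : ℤ) = ν i}

/-- Lusztig's formulas for the braid group operator `Tᵢ` on generators; these determine the
automorphism `Tᵢ` uniquely. -/
structure IsBraid (T : Fin n → U n a d ≃ₐ[𝔽] U n a d) : Prop where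
  TEself : ∀ i m, T i (Ediv n a d i m)
      = ((-1 : 𝔽) ^ m * (qq ^ (m * (m - 1)))⁻¹) • (Kinvg n a d i ^ m * Fdiv n a d i m)
  TFself : ∀ i m, T i (Fdiv n a d i m)
      = ((-1 : 𝔽) ^ m * qq ^ (m * (m - 1))) • (Ediv n a d i m * Kg n a d i ^ m)
  TE : ∀ i j m, i ≠ j → T i (Ediv n a d j m)
      = ∑ s ∈ Finset.range (m * (-(a i j)).toNat + 1),
          ((-1 : 𝔽) ^ s * (qq ^ s)⁻¹) •
            (Ediv n a d i s * Ediv n a d j m * Ediv n a d i (m * (-(a i j)).toNat - s))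
  TF : ∀ i j m, i ≠ j → T i (Fdiv n a d j m)
      = ∑ s ∈ Finset.range (m * (-(a i j)).toNat + 1),
          ((-1 : 𝔽) ^ s * qq ^ s) •
            (Fdiv n a d i (m * (-(a i j)).toNat - s) * Fdiv n a d j m * Fdiv n a d i s)
  TK : ∀ i j, T i (Kg n a d j) = Kg n a d j * Kzpow n a d i (-(a i j))

variable (T : Fin n → U n a d ≃ₐ[𝔽] U n a d)

/-- The PBW root vector `E_{β_{t+1}}^{(m)} = T_{i₁} ⋯ T_{i_t} (E_{α_{i_{t+1}}}^{(m)})`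
associated to position `t` (0-based) of the word `w = [i₁, i₂, …]`. -/
def rootVec : List (Fin n) → ℕ → ℕ → U n a d
  | [], _, _ => 1
  | i :: _, 0, m => Ediv n a d i m
  | i :: w, t + 1, m => T i (rootVec w t m)

/-- The PBW monomial `E_𝐜 = E_{β₁}^{(c₁)} ⋯ E_{β_r}^{(c_r)}` for the word `w` and exponent
list `cs`. -/
def pbw : List (Fin n) → List ℕ → U n a d
  | _, [] => 1
  | [], _ => 1
  | i :: w, c :: cs => Ediv n a d i c * T i (pbw w cs)

/-- The monomial `M_𝐜 = E_{α_{j₁}}^{(c₁)} ⋯ E_{α_{j_r}}^{(c_r)}` in divided powers of the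
Chevalley generators, for the word `w = [j₁, …, j_r]`. -/
def mono : List (Fin n) → List ℕ → U n a d
  | _, [] => 1
  | [], _ => 1
  | i :: w, c :: cs => Ediv n a d i c * mono w cs

/-- `d_β` for the root `β` in position `t` of the word `w`: equals `d_{i_{t+1}}`. -/
def dAt : List (Fin n) → ℕ → ℕ
  | [], _ => 1
  | i :: _, 0 => d i
  | _ :: w, t + 1 => dAt w t

/-- The simple root `α_i` in coordinates. -/
def simpleRoot (i : Fin n) : Fin n → ℤ := fun k => if k = i then 1 else 0

/-- The simple reflection `s_i` acting on the root lattice: `s_i α_j = α_j - a_{ij} α_i`. -/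
def sRefl (i : Fin n) (v : Fin n → ℤ) : Fin n → ℤ :=
  fun k => v k - (if k = i then ∑ j, a i j * v j else 0)

/-- The positive root `β_{t+1} = s_{i₁} ⋯ s_{i_t} (α_{i_{t+1}})` associated to position `t`
(0-based) of the word `w`. -/
def rootAt : List (Fin n) → ℕ → (Fin n → ℤ)
  | [], _ => 0
  | i :: _, 0 => simpleRoot n i
  | i :: w, t + 1 => sRefl n a i (rootAt w t)

/-- The action of the word `w = [i₁, …, i_r]`, i.e. of `s_{i₁} ⋯ s_{i_r}`, on the root
lattice. -/
def applyWord : List (Fin n) → (Fin n → ℤ) → (Fin n → ℤ)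
  | [], v => v
  | i :: w, v => sRefl n a i (applyWord w v)

/-- A word is a reduced expression iff all the associated roots `β_t` are positive. -/
def IsReducedWord (w : List (Fin n)) : Prop :=
  ∀ t < w.length, ∀ i, 0 ≤ rootAt n a w t i

/-- A word is a reduced expression of the longest element `w₀` iff it is reduced and sends
every simple root to a negative root. -/
def IsLongestWord (w : List (Fin n)) : Prop :=
  IsReducedWord n a w ∧ ∀ i j, applyWord n a w (simpleRoot n i) j ≤ 0

/-- Strict lexicographic order on `ℕ^r`, with `(1,0,…,0) > (0,1,…,0) > ⋯ > (0,…,0,1)`: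
`c < e` iff at the first index where they differ, `e` is larger. -/
def lexLt {r : ℕ} (c e : Fin r → ℕ) : Prop :=
  ∃ t : Fin r, (∀ s : Fin r, s < t → c s = e s) ∧ c t < e t

/-- Reflexive lexicographic order on `ℕ^r`. -/
def lexLe {r : ℕ} (c e : Fin r → ℕ) : Prop := c = e ∨ lexLt c e

end ChariXi

/-!
STATEMENT 9 (Lemma 2.2(i), type `A₂`): for every `𝐜 = (c₁,c₂,c₃) ∈ ℕ³` the monomial
`M = E_{α₁}^{(c₂)} E_{α₂}^{(c₁+c₂)} E_{α₁}^{(c₃)}` satisfies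
`M = E_𝐜 + ∑_{𝐝 > 𝐜} ξ_𝐝 E_𝐝` with `ξ_𝐝 ∈ ℤ[q,q⁻¹]`, i.e. `f(𝐜) = (c₂, c₁+c₂, c₃)`
works in Theorem 1(i) for type `A₂`.

Here `n = 2`, the simple roots `α₁, α₂` are indexed `0, 1 : Fin 2`, the Cartan matrix is
`![![2,-1],![-1,2]]` with `d = (1,1)`, the reduced expressions are `jw = s₁s₂s₁ = [0,1,0]`
and `iw = s₂s₁s₂ = [1,0,1]`, and `E_𝐜` are the PBW monomials built on `iw`.
-/

open ChariXi

/-!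
Write `x = E_{α₁}`, `y = E_{α₂}`. The root vector of `α₁ + α₂` is `z = T₂(x) = xy - q⁻¹yx`, and the
two quantum Serre relations say exactly that `xz = qzx` and `zy = qyz`. Moving the `x`'s past the
`y`'s with these rules gives, by induction on `m`,
`x^{(m)} y^{(p+m)} = ∑_{k+l=m} q^{-l(p+l)} y^{(p+l)} z^{(k)} x^{(l)}`.
Since `T₂T₁(y) = x`, multiplying on the right by `x^{(c₃)}` (with `m = c₂`, `p = c₁`) turns each
summand into a Gaussian binomial coefficient times the PBW monomial with exponents
`(c₁ + l, c₂ - l, l + c₃)`. The term `l = 0` is `E_𝐜`, and the others are lexicographically larger.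
-/

namespace ChariXi

section QuantumIntegers

theorem qq_ne_zero : qq ≠ 0 := RatFunc.X_ne_zero

theorem qq_pow_ne_one {m : ℕ} (hm : m ≠ 0) : qq ^ m ≠ 1 := by
  intro h
  have hX : (Polynomial.X : Polynomial ℚ) ^ m = 1 :=
    RatFunc.algebraMap_injective ℚ (by simpa [qq] using h)
  exact hm (by simpa using congrArg Polynomial.natDegree hX)

theorem qq_pow_sub_inv_pow_ne_zero {m : ℕ} (hm : m ≠ 0) : qq ^ m - qq⁻¹ ^ m ≠ 0 := by
  intro h
  refine qq_pow_ne_one (m := m + m) (by omega) ?_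
  nth_rewrite 1 [pow_add, sub_eq_zero.mp h]
  rw [inv_pow, inv_mul_cancel₀ (pow_ne_zero m qq_ne_zero)]

variable {d : ℕ}

theorem qInt_ne_zero (hd : d ≠ 0) {m : ℕ} (hm : m ≠ 0) : qInt d m ≠ 0 :=
  div_ne_zero (qq_pow_sub_inv_pow_ne_zero (mul_ne_zero hd hm)) (qq_pow_sub_inv_pow_ne_zero hd)

@[simp]
theorem qInt_zero : qInt d 0 = 0 := by simp [qInt]

theorem qInt_one (hd : d ≠ 0) : qInt d 1 = 1 := by
  simpa [qInt] using div_self (qq_pow_sub_inv_pow_ne_zero hd)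

theorem qInt_add (k l : ℕ) :
    qInt d (k + l) = (qq ^ d)⁻¹ ^ l * qInt d k + (qq ^ d) ^ k * qInt d l := by
  have hl : (qq ^ d) ^ l ≠ 0 := pow_ne_zero _ (pow_ne_zero _ qq_ne_zero)
  simp only [qInt, mul_div_assoc', ← add_div, pow_mul, inv_pow, pow_add]
  congr 1
  field_simp
  ring

theorem qInt_two (hd : d ≠ 0) : qInt d 2 = qq ^ d + (qq ^ d)⁻¹ := by
  simpa [qInt_one hd, add_comm] using qInt_add (d := d) 1 1

theorem qFact_succ (m : ℕ) : qFact d (m + 1) = qInt d (m + 1) * qFact d m := rfl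

theorem qFact_ne_zero (hd : d ≠ 0) (m : ℕ) : qFact d m ≠ 0 := by
  induction m with
  | zero => exact one_ne_zero
  | succ m ih => exact mul_ne_zero (qInt_ne_zero hd m.succ_ne_zero) ih

theorem qBinom_zero_right (hd : d ≠ 0) (m : ℕ) : qBinom d m 0 = 1 := by
  simpa [qBinom, qFact] using div_self (qFact_ne_zero hd m)

theorem qBinom_self (hd : d ≠ 0) (m : ℕ) : qBinom d m m = 1 := by
  simpa [qBinom, qFact] using div_self (qFact_ne_zero hd m)

theorem qBinom_add_left (k l : ℕ) :
    qBinom d (k + l) k = qFact d (k + l) / (qFact d k * qFact d l) := by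
  rw [qBinom, Nat.add_sub_cancel_left]

theorem qBinom_two_one (hd : d ≠ 0) : qBinom d 2 1 = qq ^ d + (qq ^ d)⁻¹ := by
  simp [qBinom, qFact, qInt_one hd, qInt_two hd]

theorem qBinom_pascal (hd : d ≠ 0) (k l : ℕ) :
    qBinom d (k + 1 + (l + 1)) (k + 1)
      = (qq ^ d)⁻¹ ^ (l + 1) * qBinom d (k + (l + 1)) k
        + (qq ^ d) ^ (k + 1) * qBinom d (k + 1 + l) (k + 1) := by
  have hk := qFact_ne_zero hd k
  have hl := qFact_ne_zero hd l
  have hk' := qInt_ne_zero hd k.succ_ne_zero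
  have hl' := qInt_ne_zero hd l.succ_ne_zero
  have hsucc : qFact d (k + 1 + (l + 1)) = qInt d (k + 1 + (l + 1)) * qFact d (k + 1 + l) := rfl
  rw [qBinom_add_left, qBinom_add_left, qBinom_add_left, hsucc, qInt_add,
    Nat.add_right_comm k 1 l, ← Nat.add_assoc k l 1, qFact_succ k, qFact_succ l]
  field_simp

theorem qq_pow_mem_𝒜 (d : ℕ) : qq ^ d ∈ 𝒜 :=
  pow_mem (Subring.subset_closure (by simp)) d

theorem qq_pow_inv_mem_𝒜 (d : ℕ) : (qq ^ d)⁻¹ ∈ 𝒜 := by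
  rw [← inv_pow]
  exact pow_mem (Subring.subset_closure (by simp)) d

theorem qBinom_add_mem_𝒜 (hd : d ≠ 0) : ∀ k l : ℕ, qBinom d (k + l) k ∈ 𝒜
  | 0, l => by rw [qBinom_zero_right hd]; exact one_mem 𝒜
  | k + 1, 0 => by rw [Nat.add_zero, qBinom_self hd]; exact one_mem 𝒜
  | k + 1, l + 1 => by
    rw [qBinom_pascal hd]
    exact add_mem (mul_mem (pow_mem (qq_pow_inv_mem_𝒜 d) _) (qBinom_add_mem_𝒜 hd k (l + 1)))
      (mul_mem (pow_mem (qq_pow_mem_𝒜 d) _) (qBinom_add_mem_𝒜 hd (k + 1) l))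

end QuantumIntegers

section QuantumCommutators

variable {k A B : Type*} [Field k] [Ring A] [Algebra k A] [Ring B] [Algebra k B]

/-- The `q`-commutator `[x, y]_q = xy - q⁻¹yx`, through which `T_i` acts on a neighbouring
Chevalley generator: `T_i E_j = [E_j, E_i]_q`. -/
def qComm (q : k) (x y : A) : A := x * y - q⁻¹ • (y * x)

/-- The quantum Serre relation between `x` and `y` for the Cartan integer `-1`, with its negative
term moved to the right-hand side. -/
def IsQSerre (q : k) (x y : A) : Prop := y * x ^ 2 + x ^ 2 * y = (q + q⁻¹) • (x * y * x)

variable {q : k} {x y z e f t t' : A}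

theorem qComm_eq_add_neg_smul (q : k) (x y : A) :
    qComm q x y = x * y + -q⁻¹ • (y * x) := by
  rw [qComm, neg_smul, sub_eq_add_neg]

theorem map_qComm (φ : A →ₐ[k] B) (x y : A) : φ (qComm q x y) = qComm q (φ x) (φ y) := by
  simp [qComm]

theorem mul_eq_qComm_add (q : k) (x y : A) : x * y = qComm q x y + q⁻¹ • (y * x) :=
  (sub_add_cancel _ _).symm

theorem isQSerre_iff :
    IsQSerre q x y ↔ y * x ^ 2 + -(q + q⁻¹) • (x * y * x) + x ^ 2 * y = 0 := by
  rw [IsQSerre, neg_smul, ← sub_eq_add_neg, sub_add_eq_add_sub, sub_eq_zero]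

theorem IsQSerre.mul_qComm (h : IsQSerre q x y) (hq : q ≠ 0) :
    x * qComm q x y = q • (qComm q x y * x) := by
  have hxy : x * (x * y) = (q + q⁻¹) • (x * (y * x)) - y * (x * x) := by
    rw [eq_sub_iff_add_eq']
    simpa only [IsQSerre, pow_two, mul_assoc] using h
  simp only [qComm, mul_sub, sub_mul, mul_smul_comm, smul_mul_assoc, mul_assoc, hxy, smul_sub,
    smul_inv_smul₀ hq, add_smul]
  abel

theorem IsQSerre.qComm_mul (h : IsQSerre q y x) (hq : q ≠ 0) :
    qComm q x y * y = q • (y * qComm q x y) := by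
  have hxy : x * (y * y) = (q + q⁻¹) • (y * (x * y)) - y * (y * x) := by
    rw [eq_sub_iff_add_eq]
    simpa only [IsQSerre, pow_two, mul_assoc] using h
  simp only [qComm, mul_sub, sub_mul, mul_smul_comm, smul_mul_assoc, mul_assoc, hxy, smul_sub,
    smul_inv_smul₀ hq, add_smul]
  abel

theorem mul_qComm_of_mul_eq_smul {r s : k} (hx : t * x = r • (x * t)) (hy : t * y = s • (y * t)) :
    t * qComm q x y = (r * s) • (qComm q x y * t) := by
  have hmul {u v : A} {r s : k} (hu : t * u = r • (u * t)) (hv : t * v = s • (v * t)) :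
      t * (u * v) = (r * s) • (u * v * t) := by
    rw [← mul_assoc, hu, smul_mul_assoc, mul_assoc, hv, mul_smul_comm, smul_smul, mul_assoc]
  rw [qComm, mul_sub, mul_smul_comm, hmul hx hy, hmul hy hx, sub_mul, smul_sub, smul_mul_assoc,
    smul_comm, mul_comm s r]

theorem mul_inv_of_mul_eq_smul {r : k} (htt' : t * t' = 1) (ht't : t' * t = 1)
    (h : t * x = r • (x * t)) : x * t' = r • (t' * x) :=
  calc x * t' = t' * (t * x) * t' := by rw [← mul_assoc, ht't, one_mul]
    _ = r • (t' * x) := by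
      rw [h, mul_smul_comm, smul_mul_assoc, ← mul_assoc, mul_assoc _ t, htt', mul_one]

theorem qComm_mul_of_mul_eq_add (hq : q - q⁻¹ ≠ 0) (hxf : x * f = f * x)
    (hef : e * f = f * e + (q - q⁻¹)⁻¹ • (t - t'))
    (hxt : x * t = q • (t * x)) (hxt' : x * t' = q⁻¹ • (t' * x)) :
    qComm q x e * f = f * qComm q x e + t * x := by
  have hxef : x * e * f = f * (x * e) + (q - q⁻¹)⁻¹ • (q • (t * x) - q⁻¹ • (t' * x)) := by
    rw [mul_assoc, hef, mul_add, ← mul_assoc, hxf, mul_smul_comm, mul_sub, hxt, hxt', mul_assoc]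
  have hexf : e * x * f = f * (e * x) + (q - q⁻¹)⁻¹ • (t * x - t' * x) := by
    rw [mul_assoc, hxf, ← mul_assoc, hef, add_mul, smul_mul_assoc, sub_mul, mul_assoc]
  have hcancel : (q - q⁻¹)⁻¹ • (q • (t * x) - q⁻¹ • (t * x)) = t * x := by
    rw [← sub_smul, inv_smul_smul₀ hq]
  rw [← hcancel, qComm, sub_mul, smul_mul_assoc, hxef, hexf, mul_sub, mul_smul_comm]
  simp only [smul_sub, smul_add, smul_comm q⁻¹ (q - q⁻¹)⁻¹]
  abel

theorem qComm_neg_mul_eq (hq : q ≠ 0) (ht : t' * t = 1) (hzt' : z * t' = q • (t' * z))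
    (hzf : z * f = f * z + t * x) : qComm q (-(t' * f)) z = x := by
  have hzf' : z * (t' * f) = q • (t' * f * z + x) := by
    rw [← mul_assoc, hzt', smul_mul_assoc, mul_assoc, hzf, mul_add, ← mul_assoc t' t, ht, one_mul,
      mul_assoc]
  rw [qComm, mul_neg, hzf', smul_neg, inv_smul_smul₀ hq]
  noncomm_ring

end QuantumCommutators

section DividedPowers

variable {A B : Type*} [Ring A] [Algebra 𝔽 A] [Ring B] [Algebra 𝔽 B] {d : ℕ}

/-- The divided power `x^{(m)} = x^m / [m]_d!` in an arbitrary `ℚ(q)`-algebra. -/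
def divPow (d : ℕ) (x : A) (m : ℕ) : A := (qFact d m)⁻¹ • x ^ m

@[simp]
theorem divPow_zero (x : A) : divPow d x 0 = 1 := by simp [divPow, qFact]

theorem divPow_one (hd : d ≠ 0) (x : A) : divPow d x 1 = x := by
  simp [divPow, qFact, qInt_one hd]

theorem map_divPow (φ : A →ₐ[𝔽] B) (x : A) (m : ℕ) : φ (divPow d x m) = divPow d (φ x) m := by
  simp [divPow]

theorem mul_divPow_self (x : A) (m : ℕ) : x * divPow d x m = divPow d x m * x := by
  rw [divPow, mul_smul_comm, smul_mul_assoc, ← pow_succ, ← pow_succ']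

theorem qInt_smul_divPow_succ (hd : d ≠ 0) (x : A) (m : ℕ) :
    qInt d (m + 1) • divPow d x (m + 1) = divPow d x m * x := by
  have hm : qInt d (m + 1) ≠ 0 := qInt_ne_zero hd m.succ_ne_zero
  rw [divPow, divPow, qFact_succ, mul_inv, mul_smul, smul_inv_smul₀ hm, pow_succ, smul_mul_assoc]

theorem divPow_mul_divPow (hd : d ≠ 0) (x : A) (k l : ℕ) :
    divPow d x k * divPow d x l = qBinom d (k + l) k • divPow d x (k + l) := by
  have := qFact_ne_zero hd (k + l)
  simp only [divPow, smul_mul_smul_comm, ← pow_add, smul_smul, qBinom_add_left]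
  congr 1
  field_simp

variable {x y z : A}

theorem mul_divPow_of_mul_eq_smul (hxz : x * z = qq ^ d • (z * x)) (k : ℕ) :
    x * divPow d z k = (qq ^ d) ^ k • (divPow d z k * x) := by
  have hpow : x * z ^ k = (qq ^ d) ^ k • (z ^ k * x) := by
    induction k with
    | zero => simp
    | succ k ih =>
      rw [pow_succ, ← mul_assoc, ih, smul_mul_assoc, mul_assoc, hxz, mul_smul_comm, smul_smul,
        ← pow_succ, mul_assoc]
  rw [divPow, mul_smul_comm, hpow, smul_mul_assoc, smul_comm]

theorem mul_pow_succ_of_mul_eq_add (hd : d ≠ 0) (hxy : x * y = z + (qq ^ d)⁻¹ • (y * x))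
    (hzy : z * y = qq ^ d • (y * z)) (m : ℕ) :
    x * y ^ (m + 1)
      = (qq ^ d)⁻¹ ^ (m + 1) • (y ^ (m + 1) * x) + qInt d (m + 1) • (y ^ m * z) := by
  induction m with
  | zero => simp [hxy, add_comm, qInt_one hd]
  | succ m ih =>
    have hqInt : qInt d (m + 1 + 1) = (qq ^ d)⁻¹ ^ (m + 1) + qInt d (m + 1) * qq ^ d := by
      rw [add_comm (m + 1) 1, qInt_add, qInt_one hd, mul_one, pow_one, mul_comm (qq ^ d)]
    calc x * y ^ (m + 1 + 1) = x * y ^ (m + 1) * y := by rw [pow_succ y (m + 1), mul_assoc]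
      _ = (qq ^ d)⁻¹ ^ (m + 1) • (y ^ (m + 1) * (x * y))
            + qInt d (m + 1) • (y ^ m * (z * y)) := by
        rw [ih, add_mul, smul_mul_assoc, smul_mul_assoc, mul_assoc, mul_assoc]
      _ = (qq ^ d)⁻¹ ^ (m + 1) • (y ^ (m + 1) * z)
            + (qq ^ d)⁻¹ ^ (m + 1 + 1) • (y ^ (m + 1 + 1) * x)
            + (qInt d (m + 1) * qq ^ d) • (y ^ (m + 1) * z) := by
        simp only [hxy, hzy, mul_add, smul_add, mul_smul_comm, smul_smul, ← mul_assoc, ← pow_succ]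
      _ = _ := by
        rw [hqInt, add_smul]
        abel

theorem mul_divPow_succ_of_mul_eq_add (hd : d ≠ 0) (hxy : x * y = z + (qq ^ d)⁻¹ • (y * x))
    (hzy : z * y = qq ^ d • (y * z)) (m : ℕ) :
    x * divPow d y (m + 1)
      = (qq ^ d)⁻¹ ^ (m + 1) • (divPow d y (m + 1) * x) + divPow d y m * z := by
  have hfact : (qFact d (m + 1))⁻¹ * qInt d (m + 1) = (qFact d m)⁻¹ := by
    rw [qFact_succ, mul_inv_rev, inv_mul_cancel_right₀ (qInt_ne_zero hd m.succ_ne_zero)]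
  rw [divPow, divPow, mul_smul_comm, mul_pow_succ_of_mul_eq_add hd hxy hzy, smul_add,
    smul_smul _ (qInt d (m + 1)), hfact, smul_mul_assoc, smul_mul_assoc, smul_comm]

theorem mul_divPow_mul_divPow_mul_divPow (hd : d ≠ 0) (hxy : x * y = z + (qq ^ d)⁻¹ • (y * x))
    (hxz : x * z = qq ^ d • (z * x)) (hzy : z * y = qq ^ d • (y * z)) (p k l : ℕ) :
    x * (divPow d y (p + 1) * divPow d z k * divPow d x l)
      = qInt d (k + 1) • (divPow d y p * divPow d z (k + 1) * divPow d x l)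
        + ((qq ^ d)⁻¹ ^ (p + 1) * (qq ^ d) ^ k * qInt d (l + 1)) •
          (divPow d y (p + 1) * divPow d z k * divPow d x (l + 1)) := by
  have hz : z * divPow d z k = qInt d (k + 1) • divPow d z (k + 1) := by
    rw [mul_divPow_self, qInt_smul_divPow_succ hd]
  have hx : x * divPow d x l = qInt d (l + 1) • divPow d x (l + 1) := by
    rw [mul_divPow_self, qInt_smul_divPow_succ hd]
  calc x * (divPow d y (p + 1) * divPow d z k * divPow d x l)
      = x * divPow d y (p + 1) * divPow d z k * divPow d x l := by simp only [mul_assoc]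
    _ = (qq ^ d)⁻¹ ^ (p + 1) • (divPow d y (p + 1) * (x * divPow d z k) * divPow d x l)
          + divPow d y p * (z * divPow d z k) * divPow d x l := by
      rw [mul_divPow_succ_of_mul_eq_add hd hxy hzy]
      simp only [add_mul, smul_mul_assoc, mul_assoc]
    _ = ((qq ^ d)⁻¹ ^ (p + 1) * (qq ^ d) ^ k) •
            (divPow d y (p + 1) * divPow d z k * (x * divPow d x l))
          + qInt d (k + 1) • (divPow d y p * divPow d z (k + 1) * divPow d x l) := by
      simp only [mul_divPow_of_mul_eq_smul hxz, hz, smul_mul_assoc, mul_smul_comm, smul_smul,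
        mul_assoc]
    _ = _ := by rw [hx, mul_smul_comm, smul_smul, add_comm]

open Finset in
theorem qInt_smul_sum_antidiagonal_succ {M : Type*} [AddCommMonoid M] [Module 𝔽 M]
    (g : ℕ × ℕ → M) (m : ℕ) :
    qInt d (m + 1) • ∑ kl ∈ antidiagonal (m + 1), g kl
      = ∑ kl ∈ antidiagonal m,
          (((qq ^ d)⁻¹ ^ kl.2 * qInt d (kl.1 + 1)) • g (kl.1 + 1, kl.2)
            + ((qq ^ d) ^ kl.1 * qInt d (kl.2 + 1)) • g (kl.1, kl.2 + 1)) := by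
  have hadd : qInt d (m + 1) • ∑ kl ∈ antidiagonal (m + 1), g kl
      = ∑ kl ∈ antidiagonal (m + 1), ((qq ^ d)⁻¹ ^ kl.2 * qInt d kl.1) • g kl
        + ∑ kl ∈ antidiagonal (m + 1), ((qq ^ d) ^ kl.1 * qInt d kl.2) • g kl := by
    rw [← sum_add_distrib, smul_sum]
    refine sum_congr rfl fun kl hkl => ?_
    rw [← add_smul, ← qInt_add, mem_antidiagonal.mp hkl]
  rw [hadd, Nat.sum_antidiagonal_succ, Nat.sum_antidiagonal_succ', sum_add_distrib]
  simp only [qInt_zero, mul_zero, zero_smul, zero_add]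

open Finset in
theorem divPow_mul_divPow_add_eq_sum (hd : d ≠ 0) (hxy : x * y = z + (qq ^ d)⁻¹ • (y * x))
    (hxz : x * z = qq ^ d • (z * x)) (hzy : z * y = qq ^ d • (y * z)) (m p : ℕ) :
    divPow d x m * divPow d y (p + m)
      = ∑ kl ∈ antidiagonal m, (qq ^ d)⁻¹ ^ (kl.2 * (p + kl.2)) •
          (divPow d y (p + kl.2) * divPow d z kl.1 * divPow d x kl.2) := by
  induction m generalizing p with
  | zero => simp
  | succ m ih =>
    refine smul_right_injective A (qInt_ne_zero hd m.succ_ne_zero) ?_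
    beta_reduce
    rw [qInt_smul_sum_antidiagonal_succ, ← smul_mul_assoc, qInt_smul_divPow_succ hd,
      ← mul_divPow_self, mul_assoc, ← Nat.add_assoc, Nat.add_right_comm, ih, mul_sum]
    refine sum_congr rfl fun ⟨k, l⟩ _ => ?_
    rw [mul_smul_comm, Nat.add_right_comm p 1 l, mul_divPow_mul_divPow_mul_divPow hd hxy hxz hzy,
      smul_add, smul_smul, smul_smul, smul_smul, smul_smul, Nat.add_assoc p l 1]
    congr 2 <;> ring

end DividedPowers

section EnvelopingAlgebra

variable {n : ℕ} {a : Fin n → Fin n → ℤ} {d : Fin n → ℕ}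

theorem Ediv_eq_divPow (i : Fin n) (m : ℕ) : Ediv n a d i m = divPow (d i) (Eg n a d i) m := rfl

theorem mk_eq_of_rel {u v : FreeAlgebra 𝔽 (Gen n)} (h : Rel n a d u v) :
    mk n a d u = mk n a d v :=
  RingQuot.mkAlgHom_rel 𝔽 h

theorem Kg_mul_Kinvg (i : Fin n) : Kg n a d i * Kinvg n a d i = 1 := by
  simpa [Kg, Kinvg] using mk_eq_of_rel (Rel.KKinv i)

theorem Kinvg_mul_Kg (i : Fin n) : Kinvg n a d i * Kg n a d i = 1 := by
  simpa [Kg, Kinvg] using mk_eq_of_rel (Rel.KinvK i)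

theorem Kg_mul_Eg (i j : Fin n) :
    Kg n a d i * Eg n a d j = qq ^ ((d i : ℤ) * a i j) • (Eg n a d j * Kg n a d i) := by
  simpa [Kg, Eg] using mk_eq_of_rel (Rel.KE i j)

theorem Eg_mul_Fg_self (i : Fin n) :
    Eg n a d i * Fg n a d i
      = Fg n a d i * Eg n a d i
        + (qq ^ d i - (qq ^ d i)⁻¹)⁻¹ • (Kg n a d i - Kinvg n a d i) := by
  rw [← sub_eq_iff_eq_add']
  simpa [Kg, Kinvg, Eg, Fg] using mk_eq_of_rel (Rel.EF i i)

theorem Eg_mul_Fg_of_ne {i j : Fin n} (h : i ≠ j) :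
    Eg n a d i * Fg n a d j = Fg n a d j * Eg n a d i := by
  rw [← sub_eq_zero]
  simpa [Eg, Fg, h] using mk_eq_of_rel (Rel.EF i j)

theorem isQSerre_Eg {i j : Fin n} (hne : i ≠ j) (hd : d i ≠ 0) (hij : a i j = -1) :
    IsQSerre (qq ^ d i) (Eg n a d i) (Eg n a d j) := by
  have h := mk_eq_of_rel (Rel.serreE (a := a) (d := d) i j hne)
  have h2 : (1 - (-1 : ℤ)).toNat = 2 := rfl
  simp only [hij, h2, Finset.sum_range_succ, Finset.sum_range_zero, qBinom_zero_right hd,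
    qBinom_two_one hd, qBinom_self hd, map_add, map_smul, map_mul, map_pow, map_zero] at h
  exact isQSerre_iff.mpr (by simpa [Eg] using h)

theorem Kg_mul_Eg_self {i : Fin n} (hii : a i i = 2) :
    Kg n a d i * Eg n a d i = (qq ^ d i) ^ 2 • (Eg n a d i * Kg n a d i) := by
  simpa [hii, zpow_mul, zpow_ofNat] using Kg_mul_Eg (a := a) (d := d) i i

theorem Kg_mul_Eg_of_eq_neg_one {i j : Fin n} (hij : a i j = -1) :
    Kg n a d i * Eg n a d j = (qq ^ d i)⁻¹ • (Eg n a d j * Kg n a d i) := by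
  simpa [hij] using Kg_mul_Eg (a := a) (d := d) i j

theorem qComm_Eg_mul_Kinvg {i j : Fin n} (hii : a i i = 2) (hij : a i j = -1) :
    qComm (qq ^ d i) (Eg n a d j) (Eg n a d i) * Kinvg n a d i
      = qq ^ d i • (Kinvg n a d i * qComm (qq ^ d i) (Eg n a d j) (Eg n a d i)) := by
  refine mul_inv_of_mul_eq_smul (Kg_mul_Kinvg i) (Kinvg_mul_Kg i) ?_
  rw [mul_qComm_of_mul_eq_smul (Kg_mul_Eg_of_eq_neg_one hij) (Kg_mul_Eg_self hii), pow_two,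
    inv_mul_cancel_left₀ (pow_ne_zero _ qq_ne_zero)]

theorem qComm_Eg_mul_Fg {i j : Fin n} (hne : i ≠ j) (hd : d i ≠ 0) (hij : a i j = -1) :
    qComm (qq ^ d i) (Eg n a d j) (Eg n a d i) * Fg n a d i
      = Fg n a d i * qComm (qq ^ d i) (Eg n a d j) (Eg n a d i) + Kg n a d i * Eg n a d j := by
  have hKE := Kg_mul_Eg_of_eq_neg_one (d := d) hij
  have hEK : Eg n a d j * Kg n a d i = qq ^ d i • (Kg n a d i * Eg n a d j) := by
    rw [hKE, smul_inv_smul₀ (pow_ne_zero _ qq_ne_zero)]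
  exact qComm_mul_of_mul_eq_add (by simpa using qq_pow_sub_inv_pow_ne_zero hd)
    (Eg_mul_Fg_of_ne hne.symm) (Eg_mul_Fg_self i) hEK
    (mul_inv_of_mul_eq_smul (Kg_mul_Kinvg i) (Kinvg_mul_Kg i) hKE)

section Braid

variable {T : Fin n → U n a d ≃ₐ[𝔽] U n a d} {i j : Fin n}

theorem IsBraid.map_Eg_self (hT : IsBraid n a d T) (hdi : d i ≠ 0) :
    T i (Eg n a d i) = -(Kinvg n a d i * Fg n a d i) := by
  have h : T i (Eg n a d i) = (-1 : 𝔽) • (Kinvg n a d i * Fg n a d i) := by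
    simpa [Ediv_eq_divPow, divPow_one hdi, Fdiv, qFact, qInt_one hdi] using hT.TEself i 1
  exact h.trans (neg_one_smul 𝔽 (Kinvg n a d i * Fg n a d i))

theorem IsBraid.map_Eg_of_ne (hT : IsBraid n a d T) (hne : i ≠ j) (hdi : d i ≠ 0)
    (hdj : d j ≠ 0) (hij : a i j = -1) :
    T i (Eg n a d j) = qComm qq (Eg n a d j) (Eg n a d i) := by
  have h := hT.TE i j 1 hne
  rw [qComm_eq_add_neg_smul]
  simpa [hij, Ediv_eq_divPow, divPow_one hdi, divPow_one hdj, Finset.sum_range_succ] using h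

theorem IsBraid.map_map_Eg (hT : IsBraid n a d T) (hdi : d i = 1) (hdj : d j ≠ 0)
    (hii : a i i = 2) (hij : a i j = -1) (hji : a j i = -1) :
    T i (T j (Eg n a d i)) = Eg n a d j := by
  have hne : i ≠ j := by rintro rfl; omega
  have hdi' : d i ≠ 0 := by omega
  have hKinv : qComm qq (Eg n a d j) (Eg n a d i) * Kinvg n a d i
      = qq • (Kinvg n a d i * qComm qq (Eg n a d j) (Eg n a d i)) := by
    simpa only [hdi, pow_one] using qComm_Eg_mul_Kinvg (d := d) hii hij
  have hF : qComm qq (Eg n a d j) (Eg n a d i) * Fg n a d i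
      = Fg n a d i * qComm qq (Eg n a d j) (Eg n a d i) + Kg n a d i * Eg n a d j := by
    simpa only [hdi, pow_one] using qComm_Eg_mul_Fg hne hdi' hij
  calc T i (T j (Eg n a d i))
      = T i (qComm qq (Eg n a d i) (Eg n a d j)) := by
        rw [hT.map_Eg_of_ne hne.symm hdj hdi' hji]
    _ = qComm qq (T i (Eg n a d i)) (T i (Eg n a d j)) :=
        map_qComm (T i : U n a d →ₐ[𝔽] U n a d) _ _
    _ = qComm qq (-(Kinvg n a d i * Fg n a d i)) (qComm qq (Eg n a d j) (Eg n a d i)) := by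
        rw [hT.map_Eg_self hdi', hT.map_Eg_of_ne hne hdi' hdj hij]
    _ = Eg n a d j :=
        qComm_neg_mul_eq qq_ne_zero (Kinvg_mul_Kg i) hKinv hF

theorem IsBraid.pbw_eq (hT : IsBraid n a d T) (hdi : d i = 1) (hdj : d j = 1)
    (hii : a i i = 2) (hij : a i j = -1) (hji : a j i = -1) (r s t : ℕ) :
    pbw n a d T [i, j, i] [r, s, t]
      = divPow 1 (Eg n a d i) r * divPow 1 (qComm qq (Eg n a d j) (Eg n a d i)) s
        * divPow 1 (Eg n a d j) t := by
  have hne : i ≠ j := by rintro rfl; omega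
  have hmap (k : Fin n) (u : U n a d) (m : ℕ) : T k (divPow 1 u m) = divPow 1 (T k u) m :=
    map_divPow (T k : U n a d →ₐ[𝔽] U n a d) u m
  simp only [pbw, Ediv_eq_divPow, hdi, hdj, map_mul, map_one, mul_one, hmap,
    hT.map_Eg_of_ne hne (by omega) (by omega) hij, hT.map_map_Eg hdi (by omega) hii hij hji,
    mul_assoc]

open Finset in
theorem IsBraid.mono_eq_sum_pbw (hT : IsBraid n a d T) (hdi : d i = 1) (hdj : d j = 1)
    (hii : a i i = 2) (hij : a i j = -1) (hji : a j i = -1) (r s t : ℕ) :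
    mono n a d [j, i, j] [s, r + s, t]
      = ∑ kl ∈ antidiagonal s, (qq⁻¹ ^ (kl.2 * (r + kl.2)) * qBinom 1 (kl.2 + t) kl.2) •
          pbw n a d T [i, j, i] [r + kl.2, kl.1, kl.2 + t] := by
  have hne : i ≠ j := by rintro rfl; omega
  have hij' : IsQSerre (qq ^ 1) (Eg n a d i) (Eg n a d j) := by
    simpa only [hdi] using isQSerre_Eg hne (d := d) (by omega) hij
  have hji' : IsQSerre (qq ^ 1) (Eg n a d j) (Eg n a d i) := by
    simpa only [hdj] using isQSerre_Eg hne.symm (d := d) (by omega) hji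
  have hq : qq ^ 1 ≠ 0 := pow_ne_zero 1 qq_ne_zero
  simp only [mono, Ediv_eq_divPow, hdi, hdj, mul_one]
  rw [← mul_assoc, divPow_mul_divPow_add_eq_sum one_ne_zero (mul_eq_qComm_add (qq ^ 1) _ _)
    (hji'.mul_qComm hq) (hij'.qComm_mul hq), sum_mul]
  refine sum_congr rfl fun ⟨k, l⟩ _ => ?_
  rw [hT.pbw_eq hdi hdj hii hij hji, smul_mul_assoc, mul_assoc _ _ (divPow 1 _ t),
    divPow_mul_divPow one_ne_zero, mul_smul_comm, smul_smul, pow_one]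

end Braid

end EnvelopingAlgebra

end ChariXi

open Finset in
theorem chariXi_lemma22_i_general {n : ℕ} {a : Fin n → Fin n → ℤ} {d : Fin n → ℕ}
    {T : Fin n → U n a d ≃ₐ[𝔽] U n a d} (hT : IsBraid n a d T) {i j : Fin n}
    (hdi : d i = 1) (hdj : d j = 1) (hii : a i i = 2) (hij : a i j = -1) (hji : a j i = -1)
    (c : Fin 3 → ℕ) :
    ∃ (s : Finset (Fin 3 → ℕ)) (ξ : (Fin 3 → ℕ) → 𝔽),
      (∀ e ∈ s, lexLt c e ∧ ξ e ∈ 𝒜) ∧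
      mono n a d [j, i, j] [c 1, c 0 + c 1, c 2]
        = pbw n a d T [i, j, i] (List.ofFn c)
          + ∑ e ∈ s, ξ e • pbw n a d T [i, j, i] (List.ofFn e) := by
  let φ : ℕ × ℕ → Fin 3 → ℕ := fun kl => ![c 0 + kl.2, kl.1, kl.2 + c 2]
  have hφ : φ.Injective := fun kl kl' h =>
    Prod.ext (congrFun h 1) (Nat.add_left_cancel (congrFun h 0))
  have hc : (c 1, 0) ∈ antidiagonal (c 1) := by simp
  -- The summation index `l` of `mono_eq_sum_pbw` is recovered from `e = φ (k, l)` as `e 0 - c 0`.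
  refine ⟨((antidiagonal (c 1)).erase (c 1, 0)).image φ,
    fun e => qq⁻¹ ^ ((e 0 - c 0) * e 0) * qBinom 1 (e 0 - c 0 + c 2) (e 0 - c 0), ?_, ?_⟩
  · simp only [forall_mem_image, mem_erase, HasAntidiagonal.mem_antidiagonal]
    rintro ⟨k, l⟩ ⟨hne, hkl⟩
    have hl : 0 < l := Nat.pos_of_ne_zero fun h => hne (Prod.ext (by simp_all) h)
    exact ⟨⟨0, fun s hs => absurd hs s.not_lt_zero, by simpa [φ] using hl⟩,
      mul_mem (pow_mem (by simpa using qq_pow_inv_mem_𝒜 1) _) (qBinom_add_mem_𝒜 one_ne_zero _ _)⟩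
  · rw [hT.mono_eq_sum_pbw hdi hdj hii hij hji, ← add_sum_erase _ _ hc, sum_image hφ.injOn]
    simp [φ, List.ofFn_succ, qBinom_zero_right]

theorem chariXi_lemma22_i
    (T : Fin 2 → U 2 ![![2,-1],![-1,2]] ![1,1] ≃ₐ[𝔽] U 2 ![![2,-1],![-1,2]] ![1,1])
    (hT : IsBraid 2 ![![2,-1],![-1,2]] ![1,1] T)
    (c : Fin 3 → ℕ) :
    ∃ (s : Finset (Fin 3 → ℕ)) (ξ : (Fin 3 → ℕ) → 𝔽),
      (∀ e ∈ s, lexLt c e ∧ ξ e ∈ 𝒜) ∧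
      mono 2 ![![2,-1],![-1,2]] ![1,1] [0, 1, 0] [c 1, c 0 + c 1, c 2]
        = pbw 2 ![![2,-1],![-1,2]] ![1,1] T [1, 0, 1] (List.ofFn c)
          + ∑ e ∈ s, ξ e • pbw 2 ![![2,-1],![-1,2]] ![1,1] T [1, 0, 1] (List.ofFn e) := by
  exact chariXi_lemma22_i_general hT rfl rfl rfl rfl rfl c
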